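/- arXiv:2312.06884 — 3 statements merged into one kernel-verified Lean document; each statement's English description precedes it below -/
import Mathlib

section
/- Let B be an n×n real symmetric matrix, g ∈ ℝⁿ, and Δ > 0. A vector s* ∈ ℝⁿ with ‖s*‖₂ ≤ Δ is a global minimizer of the trust-region subproblem, i.e. of the quadratic q(s) = gᵀs + (1/2) sᵀBs over the closed Euclidean ball {s ∈ ℝⁿ : ‖s‖₂ ≤ Δ}, if and only if there exists a scalar σ* ≥ 0 such that (B + σ*I) s* = −g, σ*(Δ − ‖s*‖₂) = 0, and the matrix B + σ*I is positive semidefinite. -/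
open Matrix

/-!
The ball is convex, so a minimizer `u` of `q` over it also minimizes the linear functional
`⟪∇q u, ·⟫` over it. Comparison with the point of the ball opposite to `∇q u` gives
`⟪∇q u, u⟫ ≤ -Δ ‖∇q u‖`, the equality case of Cauchy–Schwarz, so that `σ = ‖∇q u‖ / Δ` is a
multiplier whether or not the constraint is active.

Once `(T + σ) u = -g`, the Lagrangian `L = q + σ/2 ‖·‖²` satisfies
`L (u + d) = L u + ½ ⟪(T + σ) d, d⟫`. If `T + σ` is positive, then `u` minimizes `L` everywhere, and
by complementary slackness it minimizes `q` on the ball. Conversely, a line through `u ≠ 0` not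
orthogonal to `u` meets the sphere of radius `‖u‖` a second time, where `L - q` has the same value
as at `u`; hence `T + σ` is nonnegative in every direction not orthogonal to `u`, and these
directions are dense. If `u = 0`, then `σ = 0`, and every direction can be scaled into the ball.
-/

section InnerProductSpace

open Metric Set
open scoped RealInnerProductSpace

variable {E : Type*} [NormedAddCommGroup E] [InnerProductSpace ℝ E]
  {T : E →ₗ[ℝ] E} {g r u x : E} {Δ σ : ℝ}

/-- The objective `s ↦ ⟪g, s⟫ + ½ ⟪T s, s⟫` of the trust-region subproblem. The operator `T` need
not be bounded, so all arguments about it proceed along lines. -/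
noncomputable def quadraticModel (T : E →ₗ[ℝ] E) (g s : E) : ℝ :=
  ⟪g, s⟫ + 1 / 2 * ⟪T s, s⟫

theorem quadraticModel_add (hT : T.IsSymmetric) (g u d : E) :
    quadraticModel T g (u + d) = quadraticModel T g u + ⟪T u + g, d⟫ + 1 / 2 * ⟪T d, d⟫ := by
  have hcross : ⟪T d, u⟫ = ⟪T u, d⟫ := by rw [hT d u, real_inner_comm]
  simp only [quadraticModel, map_add, inner_add_left, inner_add_right, hcross]
  ring

theorem quadraticModel_add_of_apply_eq_neg (hT : T.IsSymmetric) (hu : T u = -g) (d : E) :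
    quadraticModel T g (u + d) = quadraticModel T g u + 1 / 2 * ⟪T d, d⟫ := by
  simp [quadraticModel_add hT, hu]

theorem quadraticModel_add_smul_id (T : E →ₗ[ℝ] E) (g : E) (σ : ℝ) (s : E) :
    quadraticModel (T + σ • LinearMap.id) g s = quadraticModel T g s + σ / 2 * ‖s‖ ^ 2 := by
  simp only [quadraticModel, LinearMap.add_apply, LinearMap.smul_apply, LinearMap.id_apply,
    inner_add_left, real_inner_smul_left, real_inner_self_eq_norm_sq]
  ring

theorem isMinOn_inner_of_isMinOn_quadraticModel {K : Set E} (hT : T.IsSymmetric)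
    (hK : StarConvex ℝ u K) (hmin : IsMinOn (quadraticModel T g) K u) :
    IsMinOn (fun s ↦ ⟪T u + g, s⟫) K u := by
  refine isMinOn_iff.2 fun s hs ↦ ?_
  set d := s - u
  have hslope : ∀ t ∈ Ioo (0 : ℝ) 1, 0 ≤ ⟪T u + g, d⟫ + t * (1 / 2 * ⟪T d, d⟫) := by
    intro t ht
    have hle := isMinOn_iff.1 hmin _ (hK.add_smul_sub_mem hs ht.1.le ht.2.le)
    rw [quadraticModel_add hT, map_smul, real_inner_smul_left, real_inner_smul_right,
      real_inner_smul_right] at hle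
    exact nonneg_of_mul_nonneg_right (by linarith) ht.1
  have hlimit := le_on_closure hslope (by fun_prop) (by fun_prop)
    (show (0 : ℝ) ∈ closure (Ioo 0 1) by simp [closure_Ioo])
  simpa [d, inner_sub_right] using hlimit

theorem inner_le_neg_mul_norm_of_isMinOn_closedBall (hΔ : 0 ≤ Δ)
    (hmin : IsMinOn (fun s ↦ ⟪r, s⟫) (closedBall 0 Δ) u) : ⟪r, u⟫ ≤ -(Δ * ‖r‖) := by
  rcases eq_or_ne r 0 with rfl | hr
  · simp
  have hr' : ‖r‖ ≠ 0 := norm_ne_zero_iff.2 hr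
  have hmem : -(Δ / ‖r‖) • r ∈ closedBall (0 : E) Δ := by
    simp [norm_smul, abs_of_nonneg hΔ, hr']
  calc ⟪r, u⟫ ≤ ⟪r, -(Δ / ‖r‖) • r⟫ := isMinOn_iff.1 hmin _ hmem
    _ = -(Δ * ‖r‖) := by
      rw [real_inner_smul_right, real_inner_self_eq_norm_sq]
      field_simp

theorem exists_multiplier_of_isMinOn_inner_closedBall (hΔ : 0 < Δ) (hu : ‖u‖ ≤ Δ)
    (hmin : IsMinOn (fun s ↦ ⟪r, s⟫) (closedBall 0 Δ) u) :
    ∃ σ : ℝ, 0 ≤ σ ∧ σ • u = -r ∧ σ * (Δ - ‖u‖) = 0 := by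
  have hinner := inner_le_neg_mul_norm_of_isMinOn_closedBall hΔ.le hmin
  have hslack : ‖r‖ * (Δ - ‖u‖) = 0 := by
    have hcauchy := neg_le_of_abs_le (abs_real_inner_le_norm r u)
    exact le_antisymm (by linarith) (mul_nonneg (norm_nonneg r) (sub_nonneg.2 hu))
  have hparallel : ‖r‖ • u + Δ • r = 0 := by
    refine norm_eq_zero.1 (pow_eq_zero_iff two_ne_zero |>.1 (le_antisymm ?_ (sq_nonneg _)))
    calc ‖‖r‖ • u + Δ • r‖ ^ 2
        = ‖r‖ ^ 2 * ‖u‖ ^ 2 + 2 * (Δ * ‖r‖) * ⟪r, u⟫ + Δ ^ 2 * ‖r‖ ^ 2 := by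
          rw [norm_add_sq_real, norm_smul, norm_smul, real_inner_smul_left, real_inner_smul_right,
            real_inner_comm, norm_norm, Real.norm_of_nonneg hΔ.le]
          ring
      _ ≤ ‖r‖ ^ 2 * Δ ^ 2 + 2 * (Δ * ‖r‖) * -(Δ * ‖r‖) + Δ ^ 2 * ‖r‖ ^ 2 := by gcongr
      _ = 0 := by ring
  refine ⟨‖r‖ / Δ, by positivity, ?_, by rw [div_mul_eq_mul_div, hslack, zero_div]⟩
  rw [div_eq_inv_mul, mul_smul, inv_smul_eq_iff₀ hΔ.ne', smul_neg]
  exact eq_neg_of_add_eq_zero_left hparallel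

theorem inner_apply_self_nonneg_of_quadraticModel_le (hT : T.IsSymmetric) (hu : T u = -g) {t : ℝ}
    (ht : t ≠ 0) (hle : quadraticModel T g u ≤ quadraticModel T g (u + t • x)) :
    0 ≤ ⟪T x, x⟫ := by
  rw [quadraticModel_add_of_apply_eq_neg hT hu, map_smul, real_inner_smul_left,
    real_inner_smul_right] at hle
  exact nonneg_of_mul_nonneg_right (a := t ^ 2) (by linarith) (by positivity)

theorem exists_ne_zero_norm_add_smul_eq (hux : ⟪u, x⟫ ≠ 0) :
    ∃ t : ℝ, t ≠ 0 ∧ ‖u + t • x‖ = ‖u‖ := by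
  have hx : ‖x‖ ≠ 0 := norm_ne_zero_iff.2 (by rintro rfl; simp at hux)
  refine ⟨-2 * ⟪u, x⟫ / ‖x‖ ^ 2, by positivity, ?_⟩
  rw [← sq_eq_sq₀ (norm_nonneg _) (norm_nonneg _), norm_add_sq_real, norm_smul, mul_pow,
    Real.norm_eq_abs, sq_abs, real_inner_smul_right]
  field_simp
  ring

theorem inner_apply_self_nonneg_of_forall_inner_ne_zero (hu : u ≠ 0)
    (h : ∀ x, ⟪u, x⟫ ≠ 0 → 0 ≤ ⟪T x, x⟫) (x : E) : 0 ≤ ⟪T x, x⟫ := by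
  by_cases hux : ⟪u, x⟫ = 0
  · have hline : ∀ t ∈ Ioo (0 : ℝ) 1, 0 ≤ ⟪T x + t • T u, x + t • u⟫ := by
      intro t ht
      have hne : ⟪u, x + t • u⟫ ≠ 0 := by
        simp [inner_add_right, real_inner_smul_right, hux, ht.1.ne', hu]
      simpa using h (x + t • u) hne
    have hlimit := le_on_closure hline (by fun_prop) (by fun_prop)
      (show (0 : ℝ) ∈ closure (Ioo 0 1) by simp [closure_Ioo])
    simpa using hlimit
  · exact h x hux

theorem isPositive_add_smul_id_of_isMinOn_closedBall (hT : T.IsSymmetric) (hΔ : 0 < Δ)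
    (hu : ‖u‖ ≤ Δ) (hmin : IsMinOn (quadraticModel T g) (closedBall 0 Δ) u)
    (hstat : T u + σ • u = -g) (hslack : σ * (Δ - ‖u‖) = 0) :
    (T + σ • LinearMap.id).IsPositive := by
  have hsymm : (T + σ • LinearMap.id).IsSymmetric := hT.add (LinearMap.IsSymmetric.id.smul rfl)
  have hcurv : ∀ (x : E) (t : ℝ), t ≠ 0 → ‖u + t • x‖ ≤ Δ → σ * ‖u‖ ^ 2 = σ * ‖u + t • x‖ ^ 2 →
      0 ≤ ⟪(T + σ • LinearMap.id : E →ₗ[ℝ] E) x, x⟫ := by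
    intro x t ht hmem hσ
    refine inner_apply_self_nonneg_of_quadraticModel_le hsymm hstat ht ?_
    have hle := isMinOn_iff.1 hmin _ (mem_closedBall_zero_iff.2 hmem)
    rw [quadraticModel_add_smul_id, quadraticModel_add_smul_id]
    linarith
  refine ⟨hsymm, ?_⟩
  rcases eq_or_ne u 0 with rfl | hu0
  · have hσ : σ = 0 := by simpa [hΔ.ne'] using hslack
    intro x
    refine hcurv x (Δ / (‖x‖ + 1)) (by positivity) ?_ (by simp [hσ])
    rw [zero_add, norm_smul, Real.norm_of_nonneg (by positivity), div_mul_eq_mul_div,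
      div_le_iff₀ (by positivity)]
    gcongr
    linarith
  · refine inner_apply_self_nonneg_of_forall_inner_ne_zero hu0 fun x hux ↦ ?_
    obtain ⟨t, ht, hnorm⟩ := exists_ne_zero_norm_add_smul_eq hux
    exact hcurv x t ht (hnorm.trans_le hu) (by rw [hnorm])

theorem isMinOn_closedBall_of_isPositive_add_smul_id (hσ : 0 ≤ σ)
    (hstat : T u + σ • u = -g) (hslack : σ * (Δ - ‖u‖) = 0)
    (hpos : (T + σ • LinearMap.id).IsPositive) :
    IsMinOn (quadraticModel T g) (closedBall 0 Δ) u := by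
  refine isMinOn_iff.2 fun s hs ↦ ?_
  have hlagrangian : quadraticModel (T + σ • LinearMap.id) g u ≤
      quadraticModel (T + σ • LinearMap.id) g s := by
    have hd := hpos.inner_nonneg_left (s - u)
    rw [← add_sub_cancel u s, quadraticModel_add_of_apply_eq_neg hpos.isSymmetric hstat]
    linarith
  have hnorm : σ * ‖s‖ ^ 2 ≤ σ * ‖u‖ ^ 2 :=
    calc σ * ‖s‖ ^ 2 ≤ σ * Δ ^ 2 := by gcongr; exact mem_closedBall_zero_iff.1 hs
      _ = σ * ‖u‖ ^ 2 := by linear_combination (Δ + ‖u‖) * hslack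
  rw [quadraticModel_add_smul_id, quadraticModel_add_smul_id] at hlagrangian
  linarith

theorem trust_region_global_min_iff_general (hT : T.IsSymmetric) (g : E) (hΔ : 0 < Δ)
    (hu : ‖u‖ ≤ Δ) :
    IsMinOn (quadraticModel T g) (closedBall 0 Δ) u ↔
      ∃ σ : ℝ, 0 ≤ σ ∧ T u + σ • u = -g ∧ σ * (Δ - ‖u‖) = 0 ∧
        (T + σ • LinearMap.id).IsPositive := by
  constructor
  · intro hmin
    have hstar := (convex_closedBall (0 : E) Δ).starConvex (mem_closedBall_zero_iff.2 hu)
    obtain ⟨σ, hσ, hσu, hslack⟩ := exists_multiplier_of_isMinOn_inner_closedBall hΔ hu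
      (isMinOn_inner_of_isMinOn_quadraticModel hT hstar hmin)
    have hstat : T u + σ • u = -g := by rw [hσu]; abel
    exact ⟨σ, hσ, hstat, hslack,
      isPositive_add_smul_id_of_isMinOn_closedBall hT hΔ hu hmin hstat hslack⟩
  · rintro ⟨σ, hσ, hstat, hslack, hpos⟩
    exact isMinOn_closedBall_of_isPositive_add_smul_id hσ hstat hslack hpos

end InnerProductSpace

section Matrix

variable {ι : Type*} [Fintype ι] [DecidableEq ι]

theorem quadraticModel_toEuclideanLin (B : Matrix ι ι ℝ) (g s : EuclideanSpace ℝ ι) :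
    quadraticModel B.toEuclideanLin g s = g ⬝ᵥ s + (1 / 2) * s ⬝ᵥ B.mulVec s := by
  simp [quadraticModel, EuclideanSpace.inner_eq_star_dotProduct, dotProduct_comm]

theorem toEuclideanLin_apply_add_smul_eq_iff (B : Matrix ι ι ℝ) (σ : ℝ)
    (v w : EuclideanSpace ℝ ι) :
    B.toEuclideanLin v + σ • v = w ↔ (B + σ • (1 : Matrix ι ι ℝ)).mulVec v = w := by
  rw [← (WithLp.ofLp_injective 2).eq_iff]
  simp [add_mulVec, smul_mulVec]

theorem isPositive_toEuclideanLin_add_smul_id_iff (B : Matrix ι ι ℝ) (σ : ℝ) :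
    (B.toEuclideanLin + σ • LinearMap.id).IsPositive ↔
      (B + σ • (1 : Matrix ι ι ℝ)).PosSemidef := by
  simp [← isPositive_toEuclideanLin_iff]

end Matrix

/-- Moré–Sorensen optimality conditions for the trust-region subproblem:
`s*` with `‖s*‖ ≤ Δ` is a global minimizer of `q(s) = gᵀs + ½ sᵀBs` over the
closed Euclidean ball of radius `Δ` iff there is `σ* ≥ 0` with
`(B + σ*I)s* = -g`, `σ*(Δ - ‖s*‖) = 0` and `B + σ*I` positive semidefinite. -/
theorem trust_region_global_min_iff (n : ℕ) (B : Matrix (Fin n) (Fin n) ℝ)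
    (hB : B.IsSymm) (g : EuclideanSpace ℝ (Fin n)) (Δ : ℝ) (hΔ : 0 < Δ)
    (sstar : EuclideanSpace ℝ (Fin n)) (hs : ‖sstar‖ ≤ Δ) :
    (∀ s : EuclideanSpace ℝ (Fin n), ‖s‖ ≤ Δ →
        g ⬝ᵥ sstar + (1 / 2) * sstar ⬝ᵥ B.mulVec sstar ≤
          g ⬝ᵥ s + (1 / 2) * s ⬝ᵥ B.mulVec s) ↔
      ∃ σstar : ℝ, 0 ≤ σstar ∧
        (B + σstar • (1 : Matrix (Fin n) (Fin n) ℝ)).mulVec sstar = -g ∧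
        σstar * (Δ - ‖sstar‖) = 0 ∧
        (B + σstar • (1 : Matrix (Fin n) (Fin n) ℝ)).PosSemidef := by
  have hT : B.toEuclideanLin.IsSymmetric := isSymmetric_toEuclideanLin_iff.2 hB
  simpa only [isMinOn_iff, mem_closedBall_zero_iff, quadraticModel_toEuclideanLin,
    toEuclideanLin_apply_add_smul_eq_iff, isPositive_toEuclideanLin_add_smul_id_iff,
    WithLp.ofLp_neg] using trust_region_global_min_iff_general hT g hΔ hs
end

section
/- Let B be an n×n real symmetric matrix, g ∈ ℝⁿ, Δ > 0, and σ₀ ∈ ℝ such that B + σ₀I is positive definite, with RᵀR = B + σ₀I for an invertible matrix R. For σ near σ₀ define s(σ) = −(B + σI)⁻¹ g, write s = s(σ₀), and assume s ≠ 0. Let q = (Rᵀ)⁻¹ s. Then the function φ(σ) = 1/Δ − 1/‖s(σ)‖₂ is differentiable at σ₀ with φ′(σ₀) = −‖q‖₂²/‖s‖₂³, and the Newton iterate for φ(σ) = 0 is σ₁ = σ₀ − φ(σ₀)/φ′(σ₀) = σ₀ + (‖s‖₂²/‖q‖₂²) · ((‖s‖₂ − Δ)/Δ). -/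
open Matrix

/-!
Since `s' = -A⁻¹ s` for `A = B + σI`, the derivative of `-1/‖s‖` is
`⟪s, s'⟫ / ‖s‖³ = -⟪s, A⁻¹ s⟫ / ‖s‖³`, and a factorization `A = R† R` turns the quadratic form
`⟪s, A⁻¹ s⟫` into `‖(R†)⁻¹ s‖²`. This works in any real Hilbert space, with `†` the adjoint.
-/

open scoped InnerProductSpace Ring

section TrialStep

variable {𝕜 E : Type*} [NontriviallyNormedField 𝕜] [NormedAddCommGroup E] [NormedSpace 𝕜 E]

/-- The trial step `s(σ) = -(B + σI)⁻¹ g` of the trust-region subproblem with Hessian `B` and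
gradient `g`. The inverse is `Ring.inverse`, so `s(σ) = 0` when `B + σI` is not invertible. -/
noncomputable def trialStep (B : E →L[𝕜] E) (g : E) (σ : 𝕜) : E :=
  -(B + σ • (1 : E →L[𝕜] E))⁻¹ʳ g

theorem hasDerivAt_ringInverse_add_smul_one {A : Type*} [NormedRing A] [NormedAlgebra 𝕜 A]
    [CompleteSpace A] {b : A} {σ : 𝕜} (h : IsUnit (b + σ • (1 : A))) :
    HasDerivAt (fun τ : 𝕜 ↦ (b + τ • (1 : A))⁻¹ʳ) (-(b + σ • (1 : A))⁻¹ʳ ^ 2) σ := by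
  have resolvent_neg (τ : 𝕜) : resolvent (-b) τ = (b + τ • (1 : A))⁻¹ʳ := by
    rw [resolvent, Algebra.algebraMap_eq_smul_one, sub_neg_eq_add, add_comm]
  have mem_resolventSet : σ ∈ resolventSet 𝕜 (-b) := by
    rwa [spectrum.mem_resolventSet_iff, Algebra.algebraMap_eq_smul_one, sub_neg_eq_add, add_comm]
  simpa only [← resolvent_neg] using spectrum.hasDerivAt_resolvent_const_left mem_resolventSet

theorem hasDerivAt_trialStep [CompleteSpace E] {B : E →L[𝕜] E} {σ : 𝕜}
    (h : IsUnit (B + σ • (1 : E →L[𝕜] E))) (g : E) :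
    HasDerivAt (trialStep B g) (-(B + σ • (1 : E →L[𝕜] E))⁻¹ʳ (trialStep B g σ)) σ := by
  refine ((hasDerivAt_ringInverse_add_smul_one h).clm_apply
    (hasDerivAt_const σ g)).neg.congr_deriv ?_
  simp [trialStep, sq]

end TrialStep

section SecularFunction

variable {H : Type*} [NormedAddCommGroup H]

/-- The secular function `φ(σ) = 1/Δ - 1/‖s(σ)‖` of a curve `s`, whose zeros are the parameters
at which `s` meets the boundary of the trust region of radius `Δ`. -/
noncomputable def secularFunction (Δ : ℝ) (s : ℝ → H) (σ : ℝ) : ℝ :=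
  1 / Δ - 1 / ‖s σ‖

variable [InnerProductSpace ℝ H]

theorem hasDerivAt_norm_of_ne_zero {f : ℝ → H} {f' : H} {t : ℝ} (hf : HasDerivAt f f' t)
    (h₀ : f t ≠ 0) : HasDerivAt (fun τ ↦ ‖f τ‖) (⟪f t, f'⟫_ℝ / ‖f t‖) t := by
  have h := hf.norm_sq.sqrt (by positivity)
  simp only [Real.sqrt_sq (norm_nonneg _)] at h
  exact h.congr_deriv (mul_div_mul_left _ _ two_ne_zero)

theorem hasDerivAt_secularFunction {s : ℝ → H} {s' : H} {σ : ℝ} (hs : HasDerivAt s s' σ)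
    (h₀ : s σ ≠ 0) (Δ : ℝ) :
    HasDerivAt (secularFunction Δ s) (⟪s σ, s'⟫_ℝ / ‖s σ‖ ^ 3) σ := by
  have norm_ne_zero : ‖s σ‖ ≠ 0 := norm_ne_zero_iff.mpr h₀
  have h := ((hasDerivAt_norm_of_ne_zero hs h₀).fun_inv norm_ne_zero).const_sub (1 / Δ)
  simp only [← one_div ‖s _‖] at h
  refine h.congr_deriv ?_
  field_simp

theorem hasDerivAt_secularFunction_trialStep [CompleteSpace H] {B : H →L[ℝ] H} {g : H} {σ : ℝ}
    (hB : IsUnit (B + σ • (1 : H →L[ℝ] H))) (h₀ : trialStep B g σ ≠ 0) (Δ : ℝ) :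
    HasDerivAt (secularFunction Δ (trialStep B g))
      (-⟪trialStep B g σ, (B + σ • (1 : H →L[ℝ] H))⁻¹ʳ (trialStep B g σ)⟫_ℝ /
        ‖trialStep B g σ‖ ^ 3) σ := by
  simpa only [inner_neg_right] using hasDerivAt_secularFunction (hasDerivAt_trialStep hB g) h₀ Δ

end SecularFunction

theorem inner_ringInverse_star_mul_self {𝕜 H : Type*} [RCLike 𝕜] [NormedAddCommGroup H]
    [InnerProductSpace 𝕜 H] [CompleteSpace H] {R : H →L[𝕜] H} (hR : IsUnit R) (x : H) :
    ⟪x, (star R * R)⁻¹ʳ x⟫_𝕜 = (‖(star R)⁻¹ʳ x‖ : 𝕜) ^ 2 := by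
  rw [Ring.inverse_mul (.inr hR), Ring.inverse_star, mul_apply_eq_comp,
    ← ContinuousLinearMap.adjoint_inner_left, ← ContinuousLinearMap.star_eq_adjoint,
    inner_self_eq_norm_sq_to_K]

-- At `b = 0` both corrections to `σ` vanish by the convention `x / 0 = 0`.
theorem sub_div_newton_secular {K : Type*} [Field K] {Δ a : K} (hΔ : Δ ≠ 0) (ha : a ≠ 0)
    (b σ : K) :
    σ - (1 / Δ - 1 / a) / (-b ^ 2 / a ^ 3) = σ + a ^ 2 / b ^ 2 * ((a - Δ) / Δ) := by
  field_simp
  ring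

theorem map_ringInverse {F M₀ N₀ : Type*} [MonoidWithZero M₀] [MonoidWithZero N₀]
    [EquivLike F M₀ N₀] [MulEquivClass F M₀ N₀] (e : F) (a : M₀) : e a⁻¹ʳ = (e a)⁻¹ʳ := by
  by_cases ha : IsUnit a
  · obtain ⟨u, rfl⟩ := ha
    rw [Ring.inverse_unit]
    exact (Ring.inverse_unit (Units.map (e : M₀ →* N₀) u)).symm
  · rw [Ring.inverse_non_unit _ ha, map_zero, Ring.inverse_non_unit]
    rwa [MulEquiv.isUnit_map]

section Matrix

variable {𝕜 ι : Type*} [RCLike 𝕜] [Fintype ι] [DecidableEq ι]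

theorem toEuclideanCLM_nonsing_inv (A : Matrix ι ι 𝕜) :
    toEuclideanCLM (𝕜 := 𝕜) A⁻¹ = (toEuclideanCLM (𝕜 := 𝕜) A)⁻¹ʳ := by
  rw [nonsing_inv_eq_ringInverse, map_ringInverse]

theorem trialStep_toEuclideanCLM (B : Matrix ι ι 𝕜) (g : ι → 𝕜) (σ : 𝕜) :
    trialStep (toEuclideanCLM (𝕜 := 𝕜) B) (WithLp.toLp 2 g) σ =
      WithLp.toLp 2 (-((B + σ • (1 : Matrix ι ι 𝕜))⁻¹ *ᵥ g)) := by
  have shift : toEuclideanCLM (𝕜 := 𝕜) B + σ • 1 = toEuclideanCLM (𝕜 := 𝕜) (B + σ • 1) := by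
    simp
  rw [trialStep, shift, ← toEuclideanCLM_nonsing_inv, toEuclideanCLM_toLp, WithLp.toLp_neg]

theorem toEuclideanCLM_transpose (A : Matrix ι ι ℝ) :
    toEuclideanCLM (𝕜 := ℝ) Aᵀ = star (toEuclideanCLM (𝕜 := ℝ) A) := by
  rw [← map_star, star_eq_conjTranspose, conjTranspose_eq_transpose_of_trivial]

end Matrix

theorem more_sorensen_newton_iterate_general {H : Type*} [NormedAddCommGroup H]
    [InnerProductSpace ℝ H] [CompleteSpace H] {B R : H →L[ℝ] H} {g : H} {Δ σ₀ : ℝ} (hΔ : Δ ≠ 0)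
    (hR : IsUnit R) (hfact : star R * R = B + σ₀ • (1 : H →L[ℝ] H))
    (hs₀ : trialStep B g σ₀ ≠ 0) {q : H} (hq : q = (star R)⁻¹ʳ (trialStep B g σ₀)) :
    HasDerivAt (secularFunction Δ (trialStep B g)) (-‖q‖ ^ 2 / ‖trialStep B g σ₀‖ ^ 3) σ₀ ∧
      σ₀ - secularFunction Δ (trialStep B g) σ₀ / (-‖q‖ ^ 2 / ‖trialStep B g σ₀‖ ^ 3) =
        σ₀ + ‖trialStep B g σ₀‖ ^ 2 / ‖q‖ ^ 2 * ((‖trialStep B g σ₀‖ - Δ) / Δ) := by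
  have isUnit_shift : IsUnit (B + σ₀ • (1 : H →L[ℝ] H)) := hfact ▸ hR.star.mul hR
  have inner_eq : ⟪trialStep B g σ₀, (B + σ₀ • (1 : H →L[ℝ] H))⁻¹ʳ (trialStep B g σ₀)⟫_ℝ =
      ‖q‖ ^ 2 := by
    rw [← hfact, hq]
    exact inner_ringInverse_star_mul_self hR _
  refine ⟨?_, sub_div_newton_secular hΔ (norm_ne_zero_iff.mpr hs₀) ‖q‖ σ₀⟩
  simpa only [inner_eq] using hasDerivAt_secularFunction_trialStep isUnit_shift hs₀ Δ

/-- Derivative of the Moré–Sorensen secular function `φ(σ) = 1/Δ − 1/‖s(σ)‖`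
at `σ₀`, where `s(σ) = -(B+σI)⁻¹g`, `RᵀR = B+σ₀I`, `q = (Rᵀ)⁻¹ s(σ₀)`,
and the resulting Newton iterate. -/
theorem more_sorensen_newton_iterate (n : ℕ) (B : Matrix (Fin n) (Fin n) ℝ)
    (hB : B.IsSymm) (g : Fin n → ℝ) (Δ : ℝ) (hΔ : 0 < Δ) (σ₀ : ℝ)
    (hpd : (B + σ₀ • (1 : Matrix (Fin n) (Fin n) ℝ)).PosDef)
    (R : Matrix (Fin n) (Fin n) ℝ) (hR : IsUnit R)
    (hfact : R.transpose * R = B + σ₀ • (1 : Matrix (Fin n) (Fin n) ℝ))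
    (s : ℝ → EuclideanSpace ℝ (Fin n))
    (hs : ∀ σ : ℝ,
      s σ = -((B + σ • (1 : Matrix (Fin n) (Fin n) ℝ))⁻¹.mulVec g))
    (hs0 : s σ₀ ≠ 0)
    (q : EuclideanSpace ℝ (Fin n)) (hq : q = R.transpose⁻¹.mulVec (s σ₀))
    (φ : ℝ → ℝ) (hφ : ∀ σ : ℝ, φ σ = 1 / Δ - 1 / ‖s σ‖) :
    HasDerivAt φ (-‖q‖ ^ 2 / ‖s σ₀‖ ^ 3) σ₀ ∧
      σ₀ - φ σ₀ / (-‖q‖ ^ 2 / ‖s σ₀‖ ^ 3) =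
        σ₀ + (‖s σ₀‖ ^ 2 / ‖q‖ ^ 2) * ((‖s σ₀‖ - Δ) / Δ) := by
  obtain rfl : φ = secularFunction Δ s := funext hφ
  obtain rfl : s = trialStep (toEuclideanCLM (𝕜 := ℝ) B) (WithLp.toLp 2 g) := funext fun σ ↦ by
    rw [trialStep_toEuclideanCLM, ← hs σ]
  have star_mul_self_eq : star (toEuclideanCLM (𝕜 := ℝ) R) * toEuclideanCLM (𝕜 := ℝ) R =
      toEuclideanCLM (𝕜 := ℝ) B + σ₀ • 1 := by
    simpa [toEuclideanCLM_transpose] using congrArg (toEuclideanCLM (𝕜 := ℝ)) hfact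
  refine more_sorensen_newton_iterate_general hΔ.ne' (hR.map _) star_mul_self_eq hs0 ?_
  rw [← toEuclideanCLM_transpose, ← toEuclideanCLM_nonsing_inv]
  exact WithLp.ofLp_injective 2 hq
end

section
/- Let H be an n×n real symmetric positive definite matrix and s, y ∈ ℝⁿ with yᵀs > 0. Then the BFGS inverse update H₊ = H + ((yᵀs + yᵀHy)/(yᵀs)²) s sᵀ − (1/(yᵀs)) (H y sᵀ + s yᵀ H) is symmetric positive definite. -/
open Matrix

/-!
With `ρ = 1 / (yᴴs)` and `V = 1 - ρ s yᴴ`, the update factors as `H₊ = V H Vᴴ + ρ s sᴴ`, a sum of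
two positive semidefinite matrices. The quadratic form of the first is positive off the kernel of
`Vᴴ`. That kernel is contained in the line spanned by `y`, on which the form of `ρ s sᴴ` is positive
because `sᴴy ≠ 0`.
-/

section QuadraticForm

variable {m n R : Type*} [Fintype m] [Fintype n] [NonUnitalSemiring R] [StarRing R]

theorem star_dotProduct_mul_mul_conjTranspose_mulVec (V : Matrix n m R) (A : Matrix m m R)
    (x : n → R) : star x ⬝ᵥ (V * A * Vᴴ) *ᵥ x = star (Vᴴ *ᵥ x) ⬝ᵥ A *ᵥ (Vᴴ *ᵥ x) := by
  simp only [star_mulVec, conjTranspose_conjTranspose, dotProduct_mulVec, vecMul_vecMul]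

theorem star_dotProduct_vecMulVec_star_mulVec (s x : n → R) :
    star x ⬝ᵥ vecMulVec s (star s) *ᵥ x = star (star s ⬝ᵥ x) * (star s ⬝ᵥ x) := by
  rw [dotProduct_mulVec, vecMul_vecMulVec, smul_dotProduct, smul_eq_mul, star_dotProduct]

end QuadraticForm

theorem posDef_mul_mul_conjTranspose_add {m n R : Type*} [Fintype m] [Fintype n] [Ring R]
    [PartialOrder R] [StarRing R] [AddLeftMono R] {A : Matrix m m R} {B : Matrix n n R}
    {V : Matrix n m R} (hA : A.PosDef) (hB : B.PosSemidef)
    (hB_ker : ∀ x, x ≠ 0 → Vᴴ *ᵥ x = 0 → 0 < star x ⬝ᵥ B *ᵥ x) :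
    (V * A * Vᴴ + B).PosDef := by
  have hVAV : (V * A * Vᴴ).PosSemidef := hA.posSemidef.mul_mul_conjTranspose_same V
  refine .of_dotProduct_mulVec_pos (hVAV.add hB).isHermitian fun x hx ↦ ?_
  rw [add_mulVec, dotProduct_add]
  by_cases hVx : Vᴴ *ᵥ x = 0
  · exact add_pos_of_nonneg_of_pos (hVAV.dotProduct_mulVec_nonneg x) (hB_ker x hx hVx)
  · rw [star_dotProduct_mul_mul_conjTranspose_mulVec]
    exact add_pos_of_pos_of_nonneg (hA.dotProduct_mulVec_pos hVx) (hB.dotProduct_mulVec_nonneg x)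

-- `inv_pos` needs `PosMulReflectLT`, which is not available for a general star-ordered ring.
theorem inv_pos_of_starOrderedRing {K : Type*} [DivisionSemiring K] [PartialOrder K] [StarRing K]
    [StarOrderedRing K] {a : K} (ha : 0 < a) : 0 < a⁻¹ := by
  have hconj : a⁻¹ * a * star a⁻¹ = a⁻¹ := by
    rw [inv_mul_cancel₀ ha.ne', one_mul, star_inv₀, ha.le.isSelfAdjoint.star_eq]
  have hnonneg : 0 ≤ a⁻¹ := hconj ▸ star_right_conjugate_nonneg ha.le a⁻¹
  exact hnonneg.lt_of_ne' (inv_ne_zero ha.ne')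

section BFGS

variable {n K : Type*} [Fintype n] [Field K] [StarRing K]

/-- The BFGS update of the inverse-Hessian approximation `H` for the step `s` and the gradient
difference `y`, with transposes replaced by conjugate transposes so that it also makes sense over
`ℂ`. The row vector `yᴴH` is written `star y ᵥ* H`. -/
def bfgsInverseUpdate (H : Matrix n n K) (s y : n → K) : Matrix n n K :=
  H + ((star y ⬝ᵥ s + star y ⬝ᵥ H *ᵥ y) / (star y ⬝ᵥ s) ^ 2) • vecMulVec s (star s) -
    (1 / (star y ⬝ᵥ s)) • (vecMulVec (H *ᵥ y) (star s) + vecMulVec s (star y ᵥ* H))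

/-- The factor `V = 1 - (yᴴs)⁻¹ s yᴴ` in the product form `V H Vᴴ + (yᴴs)⁻¹ s sᴴ` of the BFGS
update. -/
def bfgsFactor [DecidableEq n] (s y : n → K) : Matrix n n K :=
  1 - (star y ⬝ᵥ s)⁻¹ • vecMulVec s (star y)

variable [DecidableEq n] {s y : n → K}

theorem conjTranspose_bfgsFactor (hys : IsSelfAdjoint (star y ⬝ᵥ s)) :
    (bfgsFactor s y)ᴴ = 1 - (star y ⬝ᵥ s)⁻¹ • vecMulVec y (star s) := by
  simp only [bfgsFactor, conjTranspose_sub, conjTranspose_one, conjTranspose_smul,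
    conjTranspose_vecMulVec, star_star, hys.inv₀.star_eq]

theorem bfgsInverseUpdate_eq_mul_mul_conjTranspose_add (H : Matrix n n K)
    (hys : IsSelfAdjoint (star y ⬝ᵥ s)) :
    bfgsInverseUpdate H s y =
      bfgsFactor s y * H * (bfgsFactor s y)ᴴ + (star y ⬝ᵥ s)⁻¹ • vecMulVec s (star s) := by
  rw [conjTranspose_bfgsFactor hys]
  have hcoeff : (star y ⬝ᵥ s + star y ⬝ᵥ H *ᵥ y) / (star y ⬝ᵥ s) ^ 2 =
      (star y ⬝ᵥ s)⁻¹ + (star y ⬝ᵥ s)⁻¹ ^ 2 * (star y ⬝ᵥ H *ᵥ y) := by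
    field_simp
  rw [bfgsInverseUpdate, hcoeff]
  simp only [bfgsFactor, sub_mul, mul_sub, one_mul, mul_one, smul_mul_assoc, mul_smul_comm,
    vecMulVec_mul, mul_vecMulVec, vecMulVec_mulVec, op_smul_eq_smul, smul_vecMulVec,
    dotProduct_mulVec]
  module

theorem eq_smul_of_conjTranspose_bfgsFactor_mulVec_eq_zero
    (hys : IsSelfAdjoint (star y ⬝ᵥ s)) {x : n → K} (hx : (bfgsFactor s y)ᴴ *ᵥ x = 0) :
    x = ((star y ⬝ᵥ s)⁻¹ * (star s ⬝ᵥ x)) • y := by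
  rw [conjTranspose_bfgsFactor hys, sub_mulVec, one_mulVec, smul_mulVec, vecMulVec_mulVec,
    op_smul_eq_smul, smul_smul] at hx
  exact sub_eq_zero.mp hx

end BFGS

theorem bfgs_inverse_update_posDef_general {n K : Type*} [Fintype n] [Field K] [PartialOrder K]
    [StarRing K] [StarOrderedRing K] {H : Matrix n n K} (hH : H.PosDef) {s y : n → K}
    (hys : 0 < star y ⬝ᵥ s) : (bfgsInverseUpdate H s y).PosDef := by
  classical
  have hys_inv : 0 < (star y ⬝ᵥ s)⁻¹ := inv_pos_of_starOrderedRing hys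
  have hys_star : IsSelfAdjoint (star y ⬝ᵥ s) := hys.le.isSelfAdjoint
  rw [bfgsInverseUpdate_eq_mul_mul_conjTranspose_add H hys_star]
  refine posDef_mul_mul_conjTranspose_add hH
    ((posSemidef_vecMulVec_self_star s).smul hys_inv.le) fun x hx hVx ↦ ?_
  have hsx : star s ⬝ᵥ x ≠ 0 := fun hsx ↦ hx <| by
    simpa only [hsx, mul_zero, zero_smul] using
      eq_smul_of_conjTranspose_bfgsFactor_mulVec_eq_zero hys_star hVx
  rw [smul_mulVec, dotProduct_smul, star_dotProduct_vecMulVec_star_mulVec, smul_eq_mul]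
  exact mul_pos hys_inv <| star_mul_self_pos <| .of_ne_zero hsx

/-- If `H` is symmetric positive definite and `yᵀs > 0`, then the BFGS inverse
update `H₊ = H + ((yᵀs + yᵀHy)/(yᵀs)²) s sᵀ − (1/(yᵀs))(H y sᵀ + s yᵀH)` is
symmetric positive definite. -/
theorem bfgs_inverse_update_posDef (n : ℕ)
    (H : Matrix (Fin n) (Fin n) ℝ) (hH : H.PosDef) (s y : Fin n → ℝ)
    (hys : 0 < y ⬝ᵥ s) :
    (H + ((y ⬝ᵥ s + y ⬝ᵥ H.mulVec y) / (y ⬝ᵥ s) ^ 2) • Matrix.vecMulVec s s -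
        (1 / (y ⬝ᵥ s)) •
          (Matrix.vecMulVec (H.mulVec y) s +
            Matrix.vecMulVec s (H.mulVec y))).PosDef := by
  have hyH : y ᵥ* H = H *ᵥ y := by
    simpa only [star_trivial, hH.isHermitian.eq] using (star_mulVec H y).symm
  simpa only [bfgsInverseUpdate, star_trivial, hyH] using bfgs_inverse_update_posDef_general hH hys
end
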